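/- Let G = (V, E) be a strongly connected digraph with start vertex s. Then for every root r (r = s or r marked), the auxiliary graph G_r is strongly connected. -/

import Mathlib

variable {V : Type*}

/-- `p` is a path from `u` to `w` in the digraph with edge set `E`:
a nonempty list of vertices starting at `u`, ending at `w`, with consecutive edges in `E`. -/
def IsPathFrom (E : Set (V × V)) (u w : V) (p : List V) : Prop :=
  p.head? = some u ∧ p.getLast? = some w ∧ p.Chain' (fun a b => (a, b) ∈ E)

/-- There is a path from `u` to `w` in the digraph with edge set `E`. -/
def Reaches (E : Set (V × V)) (u w : V) : Prop :=
  ∃ p, IsPathFrom E u w p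

/-- Every vertex has a path to every other vertex. -/
def StronglyConnected (E : Set (V × V)) : Prop :=
  ∀ u w : V, Reaches E u w

/-- `v` and `w` are 2-edge-connected: `v = w` or, for every edge `e`,
there are paths from `v` to `w` and from `w` to `v` avoiding `e`. -/
def TwoEdgeConn (E : Set (V × V)) (v w : V) : Prop :=
  v = w ∨ ∀ e ∈ E, Reaches (E \ {e}) v w ∧ Reaches (E \ {e}) w v

/-- `w` is 2-edge-connected from `v`: for every edge `e` there is a path
from `v` to `w` avoiding `e`. -/
def TwoEdgeConnFrom (E : Set (V × V)) (v w : V) : Prop :=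
  ∀ e ∈ E, Reaches (E \ {e}) v w

/-- `u` dominates `w` in the flow graph with start vertex `s`:
every path from `s` to `w` contains `u`. -/
def Dominates (E : Set (V × V)) (s u w : V) : Prop :=
  ∀ p, IsPathFrom E s w p → u ∈ p

/-- `(u, w)` is a bridge of the flow graph with start vertex `s`:
every path from `s` to `w` contains the edge `(u, w)`. -/
def IsBridge (E : Set (V × V)) (s u w : V) : Prop :=
  (u, w) ∈ E ∧ ∀ p, IsPathFrom E s w p → (u, w) ∈ p.zip p.tail

/-- `w` is marked in the flow graph with start vertex `s`: some bridge ends at `w`. -/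
def Marked (E : Set (V × V)) (s w : V) : Prop :=
  ∃ u, IsBridge E s u w

/-- The reverse digraph: every edge direction is reversed. -/
def reverseE (E : Set (V × V)) : Set (V × V) :=
  {e | (e.2, e.1) ∈ E}

/-- `u` and `w` are mutually reachable. -/
def MutualReach (E : Set (V × V)) (u w : V) : Prop :=
  Reaches E u w ∧ Reaches E w u

/-- The number of strongly connected components: the number of equivalence
classes of the mutual-reachability relation. -/
noncomputable def numSCC (E : Set (V × V)) : ℕ :=
  Nat.card (Quot (MutualReach E))

/-- `e` is a strong bridge: removing it increases the number of strongly
connected components. -/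
def IsStrongBridge (E : Set (V × V)) (e : V × V) : Prop :=
  e ∈ E ∧ numSCC E < numSCC (E \ {e})

/-- `d` is the immediate dominator of `w` in the flow graph with start vertex `s`:
`d` is a proper dominator of `w` dominated by every proper dominator of `w`. -/
def ImmDomIs (E : Set (V × V)) (s w d : V) : Prop :=
  Dominates E s d w ∧ d ≠ w ∧ ∀ x, Dominates E s x w → x ≠ w → Dominates E s x d

/-- `r` is the deepest marked dominator `r_v` of `v`: either `r` is a marked
dominator of `v` dominated by every marked dominator of `v`, or no marked vertex
dominates `v` and `r = s`. -/
def DeepestMarkedDomIs (E : Set (V × V)) (s v r : V) : Prop :=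
  (Marked E s r ∧ Dominates E s r v ∧
    ∀ x, Marked E s x → Dominates E s x v → Dominates E s x r)
  ∨ (r = s ∧ ∀ x, Marked E s x → ¬ Dominates E s x v)

/-- `T(r)`: the vertices whose deepest marked dominator is `r`. -/
def Tset (E : Set (V × V)) (s r : V) : Set V :=
  {v | DeepestMarkedDomIs E s v r}

/-- The roots of the decomposition of the dominator tree: `s` and the marked vertices. -/
def IsRoot (E : Set (V × V)) (s r : V) : Prop :=
  r = s ∨ Marked E s r

/-- `z` is a marked child (in the dominator tree) of a boundary vertex of `T(r)`. -/
def MarkedChildOfBoundary (E : Set (V × V)) (s r z : V) : Prop :=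
  Marked E s z ∧ ∃ x ∈ Tset E s r, ImmDomIs E s z x

/-- The vertex set `V_r` of the auxiliary graph `G_r` (with `dr` playing the role
of `d(r)` when `r ≠ s`): the ordinary vertices `T(r)`, the marked children of
boundary vertices of `T(r)`, and (if `r ≠ s`) the vertex `d(r)`. -/
def auxVerts (E : Set (V × V)) (s r dr : V) : Set V :=
  Tset E s r ∪ {z | MarkedChildOfBoundary E s r z} ∪ {x | r ≠ s ∧ x = dr}

/-- The edge set `E_r` of the auxiliary graph `G_r` (with `dr` playing the role of
`d(r)` when `r ≠ s`): edges of `G` between ordinary vertices; the edge `(v, w)` for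
each boundary vertex `v ∈ T(r)` and marked child `w` of `v`; the edge `(d(r), r)` if
`r ≠ s`; and the shortcut edges of types (a), (b), (c). -/
def auxEdges (E : Set (V × V)) (s r dr : V) : Set (V × V) :=
  {e | e ∈ E ∧ e.1 ∈ Tset E s r ∧ e.2 ∈ Tset E s r} ∪
  {e | e.1 ∈ Tset E s r ∧ Marked E s e.2 ∧ ImmDomIs E s e.2 e.1} ∪
  {e | r ≠ s ∧ e = (dr, r)} ∪
  {e | ∃ u v, (u, v) ∈ E ∧ u ∈ Tset E s r ∧ ¬ Dominates E s r v ∧ e = (u, dr)} ∪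
  {e | ∃ u v z, (u, v) ∈ E ∧ v ∈ Tset E s r ∧ Dominates E s r u ∧ u ∉ Tset E s r ∧
      MarkedChildOfBoundary E s r z ∧ Dominates E s z u ∧ e = (z, v)} ∪
  {e | ∃ u v z, (u, v) ∈ E ∧ Dominates E s r u ∧ u ∉ Tset E s r ∧ ¬ Dominates E s r v ∧
      MarkedChildOfBoundary E s r z ∧ Dominates E s z u ∧ e = (z, dr)}

theorem path_single (E : Set (V × V)) (s : V) : IsPathFrom E s s [s] := by
  simp [IsPathFrom, List.Chain']

theorem path_snoc {E : Set (V × V)} {s u w : V} {q : List V} (h : IsPathFrom E s u q)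
    (e : (u, w) ∈ E) : IsPathFrom E s w (q ++ [w]) := by
  obtain ⟨h1, h2, h3⟩ := h
  refine ⟨by simp [h1], by simp, ?_⟩
  unfold List.Chain' at *
  rw [List.isChain_append]
  refine ⟨h3, by simp, ?_⟩
  intro x hx y hy
  simp_all

theorem path_cases {E : Set (V × V)} {s w : V} {p : List V} (h : IsPathFrom E s w p) :
    (p = [s] ∧ w = s) ∨ ∃ u q, IsPathFrom E s u q ∧ (u, w) ∈ E ∧ p = q ++ [w] := by
  obtain ⟨h1, h2, h3⟩ := h
  rcases List.eq_nil_or_concat' p with rfl | ⟨q, b, rfl⟩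
  · simp at h1
  · have hb : b = w := by simpa using h2
    subst hb
    rcases List.eq_nil_or_concat' q with rfl | ⟨q', c, rfl⟩
    · left; simp at h1; simp [h1]
    · right
      unfold List.Chain' at h3
      rw [List.isChain_append] at h3
      obtain ⟨h4, -, h5⟩ := h3
      refine ⟨c, q' ++ [c], ⟨?_, by simp, h4⟩, ?_, rfl⟩
      · cases q' <;> simp_all
      · exact h5 c (by simp) b (by simp)

theorem path_ind {E : Set (V × V)} {s : V} {P : V → List V → Prop} (h0 : P s [s])
    (h1 : ∀ u w q, IsPathFrom E s u q → P u q → (u, w) ∈ E → P w (q ++ [w])) :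
    ∀ (n : ℕ) (w : V) (p : List V), p.length = n → IsPathFrom E s w p → P w p := by
  intro n
  induction n with
  | zero =>
    intro w p hl hp
    have : p = [] := by simpa using hl
    subst this
    simp [IsPathFrom] at hp
  | succ n ih =>
    intro w p hl hp
    rcases path_cases hp with ⟨rfl, rfl⟩ | ⟨u, q, hq, e, rfl⟩
    · exact h0
    · exact h1 u w q hq (ih u q (by simpa using hl) hq) e

theorem reach_ind {E : Set (V × V)} {s w : V} (hw : Reaches E s w) {P : V → Prop} (h0 : P s)
    (h1 : ∀ u w, P u → (u, w) ∈ E → P w) : P w := by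
  obtain ⟨p, hp⟩ := hw
  exact path_ind (P := fun w _ => P w) h0 (fun u w _ _ h e => h1 u w h e) _ w p rfl hp

theorem reach_rfl (E : Set (V × V)) (s : V) : Reaches E s s := ⟨_, path_single E s⟩

theorem reach_snoc {E : Set (V × V)} {s u w : V} (h : Reaches E s u) (e : (u, w) ∈ E) :
    Reaches E s w := by
  obtain ⟨p, hp⟩ := h
  exact ⟨_, path_snoc hp e⟩

theorem dom_rfl (E : Set (V × V)) (s a : V) : Dominates E s a a := by
  intro p hp
  exact List.mem_of_getLast? hp.2.1

theorem dom_start (E : Set (V × V)) (s a : V) : Dominates E s s a := by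
  intro p hp
  exact List.mem_of_head? hp.1

theorem dom_s {E : Set (V × V)} {s a : V} (h : Dominates E s a s) : a = s := by
  simpa using h _ (path_single E s)

theorem dom_edge {E : Set (V × V)} {s a v w : V} (h : Dominates E s a w) (e : (v, w) ∈ E) :
    Dominates E s a v ∨ a = w := by
  by_cases hw : a = w
  · exact Or.inr hw
  · left
    intro p hp
    have := h _ (path_snoc hp e)
    simpa [hw] using this

theorem ndom_ind {E : Set (V × V)} {s a : V} {P : V → Prop} (h0 : s ≠ a → P s)
    (h1 : ∀ v w, ¬ Dominates E s a v → P v → (v, w) ∈ E → w ≠ a → P w) (v : V)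
    (hv : ¬ Dominates E s a v) : P v := by
  unfold Dominates at hv
  push Not at hv
  obtain ⟨p, hp, hap⟩ := hv
  refine path_ind (E := E) (s := s) (P := fun w p => a ∉ p → P w) ?_ ?_ _ v p rfl hp hap
  · intro h; exact h0 (by simpa [eq_comm] using h)
  · intro u w q hq ih e haq
    simp at haq
    exact h1 u w (fun hd => haq.1 (hd q hq)) (ih haq.1) e (Ne.symm haq.2)

theorem dom_trans {E : Set (V × V)} {s a b c : V} (h1 : Dominates E s a b)
    (h2 : Dominates E s b c) : Dominates E s a c := by
  by_contra hc
  refine ndom_ind (E := E) (s := s) (a := a) (P := fun v => ¬ Dominates E s b v) ?_ ?_ c hc h2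
  · intro hs hb
    have := dom_s hb
    subst this
    exact hs (dom_s h1).symm
  · intro v w hv ih e hw hb
    rcases dom_edge hb e with h | rfl
    · exact ih h
    · rcases dom_edge h1 e with h | h
      · exact hv h
      · exact hw h.symm

theorem dom_antisymm {E : Set (V × V)} {s a b : V} (hsc : StronglyConnected E)
    (h1 : Dominates E s a b) (h2 : Dominates E s b a) : a = b := by
  by_contra hab
  have := reach_ind (hsc s a) (P := fun v => ¬ Dominates E s a v ∧ ¬ Dominates E s b v) ?_ ?_
  · exact this.1 (dom_rfl _ _ _)
  · constructor
    · intro h; have := dom_s h; subst this; exact hab (dom_s h2).symm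
    · intro h; have := dom_s h; subst this; exact hab (dom_s h1)
  · rintro u w ⟨ha, hb⟩ e
    constructor
    · intro h
      rcases dom_edge h e with h | rfl
      · exact ha h
      · rcases dom_edge h2 e with h | h
        · exact hb h
        · exact hab h.symm
    · intro h
      rcases dom_edge h e with h | rfl
      · exact hb h
      · rcases dom_edge h1 e with h | h
        · exact ha h
        · exact hab h

theorem dom_total {E : Set (V × V)} {s a b w : V} (hsc : StronglyConnected E)
    (h1 : Dominates E s a w) (h2 : Dominates E s b w) :
    Dominates E s a b ∨ Dominates E s b a := by
  by_contra hcon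
  push Not at hcon
  obtain ⟨hab, hba⟩ := hcon
  have := reach_ind (hsc s w) (P := fun v => ¬ Dominates E s a v ∨ ¬ Dominates E s b v) ?_ ?_
  · tauto
  · by_contra hcon
    push Not at hcon
    have ha := dom_s hcon.1
    subst ha
    exact hab (dom_start _ _ _)
  · rintro v w (h | h) e
    · by_cases hw : a = w
      · subst hw; exact Or.inr hba
      · left; intro h'
        rcases dom_edge h' e with h' | h'
        · exact h h'
        · exact hw h'
    · by_cases hw : b = w
      · subst hw; exact Or.inl hab
      · right; intro h'
        rcases dom_edge h' e with h' | h'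
        · exact h h'
        · exact hw h'

theorem marked_ne {E : Set (V × V)} {s z : V} (h : Marked E s z) : z ≠ s := by
  rintro rfl
  obtain ⟨u, -, h⟩ := h
  simpa using h _ (path_single E z)

theorem zip_tail_snoc {z x : V} : ∀ (p : List V) (u : V), p.getLast? = some u → z ∉ p →
    (x, z) ∈ (p ++ [z]).zip (p ++ [z]).tail → x = u
  | [], _, h, _, _ => by simp at h
  | [a], u, h, _, hm => by simp at h hm; simp_all
  | a :: b :: l, u, h, hz, hm => by
    have ih := zip_tail_snoc (z := z) (x := x) (b :: l) u (by simpa using h)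
      (by simp at hz ⊢; tauto)
    simp only [List.cons_append, List.tail_cons, List.zip_cons_cons, List.mem_cons] at hm ih
    rcases hm with hm | hm
    · simp only [Prod.mk.injEq] at hm
      simp [hm.2] at hz
    · exact ih hm

theorem idom_of_edge {E : Set (V × V)} {s u z : V} (hz : Marked E s z) (e : (u, z) ∈ E)
    (hn : ¬ Dominates E s z u) : ImmDomIs E s z u := by
  have hne : u ≠ z := by rintro rfl; exact hn (dom_rfl _ _ _)
  obtain ⟨x, -, hx⟩ := hz
  have hn' := hn
  unfold Dominates at hn
  push Not at hn
  obtain ⟨p, hp, hzp⟩ := hn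
  have hxu : x = u := zip_tail_snoc p u hp.2.1 hzp (hx _ (path_snoc hp e))
  subst hxu
  refine ⟨fun q hq => (List.of_mem_zip (hx q hq)).1, hne, ?_⟩
  intro y hy hyz
  exact (dom_edge hy e).resolve_right hyz

theorem exists_idom {E : Set (V × V)} {s z : V} (hsc : StronglyConnected E)
    (hz : Marked E s z) : ∃ u, ImmDomIs E s z u := by
  by_contra hcon
  push Not at hcon
  refine reach_ind (hsc s z) (P := fun v => ¬ Dominates E s z v) ?_ ?_ (dom_rfl _ _ _)
  · intro h; exact marked_ne hz (dom_s h)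
  · intro u w hu e hw
    rcases dom_edge hw e with h | rfl
    · exact hu h
    · exact hcon u (idom_of_edge hz e hu)

theorem idom_unique {E : Set (V × V)} {s z a b : V} (hsc : StronglyConnected E)
    (ha : ImmDomIs E s z a) (hb : ImmDomIs E s z b) : a = b :=
  dom_antisymm hsc (hb.2.2 a ha.1 ha.2.1) (ha.2.2 b hb.1 hb.2.1)

theorem mem_T {E : Set (V × V)} {s r : V} (hr : IsRoot E s r) (v : V) :
    v ∈ Tset E s r ↔ Dominates E s r v ∧
      ∀ x, Marked E s x → Dominates E s x v → Dominates E s x r := by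
  constructor
  · rintro (⟨-, h⟩ | ⟨rfl, h⟩)
    · exact h
    · exact ⟨dom_start _ _ _, fun x hx hd => absurd hd (h x hx)⟩
  · rintro ⟨h1, h2⟩
    rcases hr with rfl | hr
    · right
      exact ⟨rfl, fun x hx hd => marked_ne hx (dom_s (h2 x hx hd))⟩
    · left
      exact ⟨hr, h1, h2⟩

theorem mcb_dom {E : Set (V × V)} {s r z : V} (hr : IsRoot E s r)
    (h : MarkedChildOfBoundary E s r z) : Dominates E s r z := by
  obtain ⟨-, x, hx, hi⟩ := h
  exact dom_trans ((mem_T hr x).1 hx).1 hi.1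

theorem mcb_ndom {E : Set (V × V)} {s r z : V} (hsc : StronglyConnected E) (hr : IsRoot E s r)
    (h : MarkedChildOfBoundary E s r z) : ¬ Dominates E s z r := by
  intro hz
  obtain ⟨-, x, hx, hi⟩ := h
  exact hi.2.1 (dom_antisymm hsc hi.1 (dom_trans hz ((mem_T hr x).1 hx).1))

theorem mcb_ndom_T {E : Set (V × V)} {s r z u : V} (hsc : StronglyConnected E)
    (hr : IsRoot E s r) (h : MarkedChildOfBoundary E s r z) (hu : u ∈ Tset E s r) :
    ¬ Dominates E s z u :=
  fun hd => mcb_ndom hsc hr h (((mem_T hr u).1 hu).2 z h.1 hd)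

theorem mcb_unique {E : Set (V × V)} {s r z z' u : V} (hsc : StronglyConnected E)
    (hr : IsRoot E s r) (h : MarkedChildOfBoundary E s r z)
    (h' : MarkedChildOfBoundary E s r z') (hu : Dominates E s z u) (hu' : Dominates E s z' u) :
    z = z' := by
  have key : ∀ a b, MarkedChildOfBoundary E s r a → MarkedChildOfBoundary E s r b →
      Dominates E s a b → a = b := by
    intro a b ha hb hab
    by_contra hne
    obtain ⟨x, hx, hi⟩ := hb.2
    exact mcb_ndom_T hsc hr ha hx (hi.2.2 a hab hne)
  rcases dom_total hsc hu hu' with hd | hd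
  · exact key _ _ h h' hd
  · exact (key _ _ h' h hd).symm

theorem exists_mcb [Finite V] {E : Set (V × V)} {s r : V} (hsc : StronglyConnected E)
    (hr : IsRoot E s r) (u : V) (hru : Dominates E s r u) : ∀ (n : ℕ) (x : V),
    {y | Dominates E s y x}.ncard = n → Marked E s x → Dominates E s x u →
    ¬ Dominates E s x r → ∃ z, MarkedChildOfBoundary E s r z ∧ Dominates E s z u := by
  intro n
  induction n using Nat.strong_induction_on with
  | _ n ih =>
    intro x hn hx hxu hxr
    obtain ⟨d, hd⟩ := exists_idom hsc hx
    have hrx : Dominates E s r x := (dom_total hsc hru hxu).resolve_right hxr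
    have hne : r ≠ x := by rintro rfl; exact hxr (dom_rfl _ _ _)
    have hrd := hd.2.2 r hrx hne
    by_cases hT : d ∈ Tset E s r
    · exact ⟨x, ⟨hx, d, hT, hd⟩, hxu⟩
    · rw [mem_T hr] at hT
      push Not at hT
      obtain ⟨y, hy, hyd, hyr⟩ := hT hrd
      refine ih _ ?_ y rfl hy (dom_trans hyd (dom_trans hd.1 hxu)) hyr
      rw [← hn]
      apply Set.ncard_lt_ncard _ (Set.toFinite _)
      refine ⟨fun a ha => dom_trans ha (dom_trans hyd hd.1), fun hsub => ?_⟩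
      have : Dominates E s x y := hsub (dom_rfl E s x)
      exact hd.2.1 (dom_antisymm hsc hd.1 (dom_trans this hyd))

/-- The projection of the vertices of `G` to those of the auxiliary graph, as a relation. -/
def Proj (E : Set (V × V)) (s r dr v a : V) : Prop :=
  (v ∈ Tset E s r ∧ a = v) ∨
  (Dominates E s r v ∧ v ∉ Tset E s r ∧ MarkedChildOfBoundary E s r a ∧ Dominates E s a v) ∨
  (¬ Dominates E s r v ∧ a = dr)

theorem proj_exists [Finite V] {E : Set (V × V)} {s r : V} (hsc : StronglyConnected E)
    (hr : IsRoot E s r) (dr v : V) : ∃ a, Proj E s r dr v a := by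
  by_cases h1 : Dominates E s r v
  · by_cases h2 : v ∈ Tset E s r
    · exact ⟨v, Or.inl ⟨h2, rfl⟩⟩
    · have hT := h2
      rw [mem_T hr] at hT
      push Not at hT
      obtain ⟨y, hy, hyd, hyr⟩ := hT h1
      obtain ⟨z, hz, hzv⟩ := exists_mcb hsc hr v h1 _ y rfl hy hyd hyr
      exact ⟨z, Or.inr (Or.inl ⟨h1, h2, hz, hzv⟩)⟩
  · exact ⟨dr, Or.inr (Or.inr ⟨h1, rfl⟩)⟩

theorem proj_unique {E : Set (V × V)} {s r dr v a b : V} (hsc : StronglyConnected E)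
    (hr : IsRoot E s r) (ha : Proj E s r dr v a) (hb : Proj E s r dr v b) : a = b := by
  have hT : v ∈ Tset E s r → Dominates E s r v := fun h => ((mem_T hr v).1 h).1
  rcases ha with ⟨h1, rfl⟩ | ⟨h1, h2, h3, h4⟩ | ⟨h1, rfl⟩ <;>
  rcases hb with ⟨k1, rfl⟩ | ⟨k1, k2, k3, k4⟩ | ⟨k1, rfl⟩ <;>
  first
  | rfl
  | exact mcb_unique hsc hr h3 k3 h4 k4
  | (exfalso; tauto)

theorem proj_vert {E : Set (V × V)} {s r dr v : V} (hsc : StronglyConnected E)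
    (hr : IsRoot E s r) (hdr : Marked E s r → ImmDomIs E s r dr) (hv : v ∈ auxVerts E s r dr) :
    Proj E s r dr v v := by
  rcases hv with (hv | hv) | ⟨hrs, rfl⟩
  · exact Or.inl ⟨hv, rfl⟩
  · exact Or.inr (Or.inl ⟨mcb_dom hr hv, fun h => mcb_ndom_T hsc hr hv h (dom_rfl _ _ _), hv,
      dom_rfl _ _ _⟩)
  · have hi := hdr (hr.resolve_left hrs)
    exact Or.inr (Or.inr ⟨fun h => hi.2.1 (dom_antisymm hsc hi.1 h), rfl⟩)

theorem proj_edge {E : Set (V × V)} {s r dr u v a b : V} (hsc : StronglyConnected E)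
    (hr : IsRoot E s r) (e : (u, v) ∈ E)
    (ha : Proj E s r dr u a) (hb : Proj E s r dr v b) :
    a = b ∨ (a, b) ∈ auxEdges E s r dr := by
  have hrT : r ∈ Tset E s r := (mem_T hr r).2 ⟨dom_rfl _ _ _, fun _ _ h => h⟩
  unfold auxEdges
  simp only [Set.mem_union, Set.mem_setOf_eq]
  have hdom : Dominates E s r v → ¬ Dominates E s r u → v = r ∧ r ≠ s := by
    intro h1 h2
    refine ⟨((dom_edge h1 e).resolve_left h2).symm, ?_⟩
    rintro rfl
    exact h2 (dom_start _ _ _)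
  rcases hb with ⟨k1, rfl⟩ | ⟨k1, k2, k3, k4⟩ | ⟨k1, rfl⟩
  · rcases ha with ⟨h1, rfl⟩ | ⟨h1, h2, h3, h4⟩ | ⟨h1, rfl⟩
    · right; left; left; left; left; left
      exact ⟨e, h1, k1⟩
    · right; left; right
      exact ⟨u, b, a, e, k1, h1, h2, h3, h4, rfl⟩
    · right; left; left; left; right
      obtain ⟨hv, hs⟩ := hdom ((mem_T hr _).1 k1).1 h1
      exact ⟨hs, by rw [hv]⟩
  · by_cases hbu : Dominates E s b u
    · left
      exact proj_unique hsc hr ha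
        (Or.inr (Or.inl ⟨dom_trans (mcb_dom hr k3) hbu,
          fun h => mcb_ndom_T hsc hr k3 h hbu, k3, hbu⟩))
    · have hbv := (dom_edge k4 e).resolve_left hbu
      subst hbv
      have hi := idom_of_edge k3.1 e hbu
      obtain ⟨x, hx, hix⟩ := k3.2
      have := idom_unique hsc hi hix
      subst this
      have hau : a = u := proj_unique hsc hr ha (Or.inl ⟨hx, rfl⟩)
      subst hau
      right; left; left; left; left; right
      exact ⟨hx, k3.1, hi⟩
  · rcases ha with ⟨h1, rfl⟩ | ⟨h1, h2, h3, h4⟩ | ⟨h1, rfl⟩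
    · right; left; left; right
      exact ⟨a, v, e, h1, k1, rfl⟩
    · right; right
      exact ⟨u, v, a, e, h1, h2, k1, h3, h4, rfl⟩
    · left; rfl

/-- Every auxiliary graph `G_r` of a strongly connected digraph is strongly
connected. -/
theorem aux_graph_strongly_connected
    {V : Type*} [Fintype V] (E : Set (V × V)) (s : V)
    (hsc : StronglyConnected E) (r dr : V)
    (hr : IsRoot E s r) (hdr : Marked E s r → ImmDomIs E s r dr) :
    ∀ u ∈ auxVerts E s r dr, ∀ w ∈ auxVerts E s r dr,
      Reaches (auxEdges E s r dr) u w := by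
  intro u hu w hw
  have key := reach_ind (hsc u w)
    (P := fun v => ∀ a, Proj E s r dr v a → Reaches (auxEdges E s r dr) u a) ?_ ?_
  · exact key w (proj_vert hsc hr hdr hw)
  · intro a ha
    rw [proj_unique hsc hr ha (proj_vert hsc hr hdr hu)]
    exact reach_rfl _ _
  · intro x y hx e b hb
    obtain ⟨a, ha⟩ := proj_exists hsc hr dr x
    rcases proj_edge hsc hr e ha hb with rfl | h
    · exact hx a ha
    · exact reach_snoc (hx a ha) h
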